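/- Let ℓ be a prime and m ≥ 0, n ≥ 1 integers. In GSp₄(ℚ_ℓ) one has the double coset decomposition B^{(1)}_{m,n} · diag(ℓ³, ℓ², ℓ, 1) · B^{(1)}_{m,n} = ⋃ M(w,x,y,z) · B^{(1)}_{m,n}, where M(w,x,y,z) has rows (ℓ³, ℓ²x, ℓwx+ℓy, z), (0, ℓ², ℓw, y), (0, 0, ℓ, −x), (0, 0, 0, 1) and the union is over 0 ≤ w, x < ℓ, 0 ≤ y < ℓ², 0 ≤ z < ℓ³; the ℓ⁷ listed left cosets are pairwise distinct. -/

import Mathlib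

open Pointwise

noncomputable section

/-- The standard skew-symmetric matrix `J` defining `GSp₄`. -/
def Jmat (p : ℕ) [Fact p.Prime] : Matrix (Fin 4) (Fin 4) ℚ_[p] :=
  !![0, 0, 0, 1; 0, 0, 1, 0; 0, -1, 0, 0; -1, 0, 0, 0]

/-- The subgroup `B^{(1)}_{m,n}` of `GSp₄(ℤ_ℓ)`: integral symplectic similitudes with
multiplier `μ ≡ 1 (mod ℓ^m)`, all entries below the diagonal divisible by `ℓⁿ`, and
(4,4)-entry `≡ 1 (mod ℓⁿ)`, viewed inside the 4×4 matrices over `ℚ_ℓ`. -/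
def Bmn1 (p : ℕ) [Fact p.Prime] (m n : ℕ) : Set (Matrix (Fin 4) (Fin 4) ℚ_[p]) :=
  {g | (∀ i j, ‖g i j‖ ≤ 1) ∧ ‖g.det‖ = 1 ∧
    (∃ μ : ℚ_[p], ‖μ‖ = 1 ∧ ‖μ - 1‖ ≤ (p : ℝ) ^ (-(m : ℤ)) ∧
      g.transpose * Jmat p * g = μ • Jmat p) ∧
    ‖g 1 0‖ ≤ (p : ℝ) ^ (-(n : ℤ)) ∧ ‖g 2 0‖ ≤ (p : ℝ) ^ (-(n : ℤ)) ∧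
    ‖g 2 1‖ ≤ (p : ℝ) ^ (-(n : ℤ)) ∧ ‖g 3 0‖ ≤ (p : ℝ) ^ (-(n : ℤ)) ∧
    ‖g 3 1‖ ≤ (p : ℝ) ^ (-(n : ℤ)) ∧ ‖g 3 2‖ ≤ (p : ℝ) ^ (-(n : ℤ)) ∧
    ‖g 3 3 - 1‖ ≤ (p : ℝ) ^ (-(n : ℤ))}

/-- The coset representatives `M(w,x,y,z)` for `0 ≤ w,x < ℓ`, `0 ≤ y < ℓ²`,
`0 ≤ z < ℓ³`. -/
def rep10 (p : ℕ) [Fact p.Prime] :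
    Fin p × Fin p × Fin (p ^ 2) × Fin (p ^ 3) → Matrix (Fin 4) (Fin 4) ℚ_[p] :=
  fun i => !![(p : ℚ_[p]) ^ 3, (p : ℚ_[p]) ^ 2 * ((i.2.1 : ℕ) : ℚ_[p]),
                (p : ℚ_[p]) * ((i.1 : ℕ) : ℚ_[p]) * ((i.2.1 : ℕ) : ℚ_[p]) +
                  (p : ℚ_[p]) * ((i.2.2.1 : ℕ) : ℚ_[p]), ((i.2.2.2 : ℕ) : ℚ_[p]);
              0, (p : ℚ_[p]) ^ 2, (p : ℚ_[p]) * ((i.1 : ℕ) : ℚ_[p]),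
                ((i.2.2.1 : ℕ) : ℚ_[p]);
              0, 0, (p : ℚ_[p]), -((i.2.1 : ℕ) : ℚ_[p]);
              0, 0, 0, 1]

/-!
The argument is purely integral: it works over any commutative ring with a regular element `π` in
place of `ℓ ∈ ℤ_ℓ`. Put `D = diag(π³, π², π, 1)` and write `M = U D` with `U = U(w,x,y,z)`
unipotent. For `g` in the congruence subgroup `B` one has `g D ∈ U D B` if and only if
`π ^ (j - i)` divides the entry `(i, j)` of `U⁻¹ g` for all `i < j`. Numbering rows and columns
from 1, the congruences at `(2,3)`, `(3,4)`, `(2,4)`, `(1,4)` can be solved successively and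
uniquely for `w mod π`, `x mod π`, `y mod π²`, `z mod π³`, because the last two diagonal entries
of `g` are prime to `π`; those at `(1,2)` and `(1,3)` then follow from the symplectic relations
between the last column and columns two and three.
-/

open Matrix

section Monoid

variable {M N F ι : Type*}

/-- The double coset `H d H` is the disjoint union of the pairwise distinct left cosets `r i H`,
for a subset `H` of a multiplicative structure. -/
def IsDoubleCosetDecomposition [Mul M] (H : Set M) (d : M) (r : ι → M) : Prop :=
  H * {d} * H = ⋃ i, {r i} * H ∧ Function.Injective fun i => {r i} * H

theorem IsDoubleCosetDecomposition.image [Mul M] [Mul N] [FunLike F M N] [MulHomClass F M N]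
    {H : Set M} {d : M} {r : ι → M} (h : IsDoubleCosetDecomposition H d r) {f : F}
    (hf : Function.Injective f) :
    IsDoubleCosetDecomposition (f '' H) (f d) fun i => f (r i) := by
  obtain ⟨hunion, hinj⟩ := h
  have hcoset (i : ι) : {f (r i)} * f '' H = f '' ({r i} * H) := by
    rw [Set.image_mul, Set.image_singleton]
  refine ⟨?_, ?_⟩
  · rw [Set.iUnion_congr hcoset, ← Set.image_iUnion, ← hunion, Set.image_mul, Set.image_mul,
      Set.image_singleton]
  · simp only [hcoset]
    exact hf.image_injective.comp hinj

theorem isDoubleCosetDecomposition_of_submonoid [Monoid M] (H : Submonoid M) {d : M} {u : ι → M}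
    (hu : ∀ i, u i ∈ H) (hcover : ∀ g ∈ H, ∃ i, ∃ k ∈ H, g * d = u i * d * k)
    (hinj : ∀ i j, ∀ k ∈ H, u i * d = u j * d * k → i = j) :
    IsDoubleCosetDecomposition (H : Set M) d fun i => u i * d := by
  refine ⟨Set.Subset.antisymm ?_ ?_, fun i j hij => ?_⟩
  · rintro _ ⟨_, ⟨g, hg, d, rfl, rfl⟩, b, hb, rfl⟩
    obtain ⟨i, k, hk, hgk⟩ := hcover g hg
    refine Set.mem_iUnion.2 ⟨i, u i * d, rfl, k * b, H.mul_mem hk hb, ?_⟩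
    simp only [hgk, mul_assoc]
  · exact Set.iUnion_subset fun i =>
      Set.mul_subset_mul_right (Set.singleton_subset_iff.2 ⟨u i, hu i, d, rfl, rfl⟩)
  · have hmem : u i * d ∈ {u i * d} * (H : Set M) := ⟨_, rfl, 1, H.one_mem, mul_one _⟩
    obtain ⟨_, rfl, k, hk, hik⟩ := hij.subset hmem
    exact hinj i j k hk hik.symm

end Monoid

section ResidueSystem

variable {R ι : Type*} [CommRing R] {q : R} {r : ι → R}

theorem isCoprime_of_dvd_sub_unit {x : R} (u : Rˣ) (h : q ∣ x - u) : IsCoprime x q := by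
  obtain ⟨c, hc⟩ := h
  rw [sub_eq_iff_eq_add'.1 hc]
  exact (isCoprime_one_left.of_isCoprime_of_dvd_left u.isUnit.dvd).add_mul_left_left c

/-- The family `r` represents every residue class modulo `q` exactly once; the parameters of the
coset representatives range over such families. -/
def IsResidueSystem (q : R) (r : ι → R) : Prop :=
  ∀ a, ∃! i, q ∣ a - r i

theorem IsResidueSystem.eq_of_dvd_sub (hr : IsResidueSystem q r) {i j : ι}
    (h : q ∣ r i - r j) : i = j :=
  (hr (r i)).unique (by simp only [sub_self, dvd_zero]) h

theorem IsResidueSystem.exists_dvd_sub_mul (hr : IsResidueSystem q r) {u : R}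
    (hu : IsCoprime u q) (a : R) : ∃ i, q ∣ a - r i * u := by
  obtain ⟨s, t, hst⟩ := hu
  obtain ⟨i, c, hc⟩ := (hr (a * s)).exists
  exact ⟨i, c * u + a * t, by linear_combination u * hc - a * hst⟩

theorem isResidueSystem_padicInt_natCast (p : ℕ) [Fact p.Prime] (k : ℕ) :
    IsResidueSystem ((p : ℤ_[p]) ^ k) fun i : Fin (p ^ k) => ((i : ℕ) : ℤ_[p]) := by
  intro a
  have hdvd (i : Fin (p ^ k)) :
      (p : ℤ_[p]) ^ k ∣ a - (i : ℕ) ↔ (PadicInt.toZModPow k a).val = i := by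
    rw [← Ideal.mem_span_singleton, ← PadicInt.ker_toZModPow, RingHom.mem_ker, map_sub,
      map_natCast, sub_eq_zero]
    refine ⟨fun h => by rw [h, ZMod.val_natCast_of_lt i.isLt], fun h => ?_⟩
    rw [← h, ZMod.natCast_zmod_val]
  exact ⟨⟨_, ZMod.val_lt (PadicInt.toZModPow k a)⟩, (hdvd _).2 rfl,
    fun i hi => Fin.ext ((hdvd i).1 hi).symm⟩

theorem isResidueSystem_padicInt_natCast_prime (p : ℕ) [Fact p.Prime] :
    IsResidueSystem (p : ℤ_[p]) fun i : Fin p => ((i : ℕ) : ℤ_[p]) := by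
  have := isResidueSystem_padicInt_natCast p 1
  rwa [pow_one p, pow_one] at this

end ResidueSystem

section PowDiag

variable {R : Type*} [CommRing R] {n : ℕ} {π : R}

/-- The diagonal matrix `diag(π ^ (n - 1), …, π, 1)`; for `n = 4` this is the matrix `D` of the
double coset. -/
def powDiag (n : ℕ) (π : R) : Matrix (Fin n) (Fin n) R :=
  diagonal fun i => π ^ (i.rev : ℕ)

theorem mul_powDiag_eq_powDiag_mul_iff {h k : Matrix (Fin n) (Fin n) R} :
    h * powDiag n π = powDiag n π * k ↔
      ∀ i j, h i j * π ^ (j.rev : ℕ) = π ^ (i.rev : ℕ) * k i j := by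
  simp only [← Matrix.ext_iff, powDiag, mul_diagonal, diagonal_mul]

-- The subtraction truncates, so the condition is vacuous on and below the diagonal.
theorem exists_mul_powDiag_eq_iff (hπ : IsLeftRegular π) {h : Matrix (Fin n) (Fin n) R} :
    (∃ k, h * powDiag n π = powDiag n π * k) ↔
      ∀ i j : Fin n, π ^ (j - i : ℕ) ∣ h i j := by
  simp only [mul_powDiag_eq_powDiag_mul_iff]
  constructor
  · rintro ⟨k, hk⟩ i j
    rcases le_total i j with hij | hij
    · refine ⟨k i j, hπ.pow (j.rev : ℕ) ?_⟩
      have hrev : (i.rev : ℕ) = j.rev + (j - i) := by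
        simp only [Fin.val_rev]; omega
      change π ^ (j.rev : ℕ) * h i j = π ^ (j.rev : ℕ) * (π ^ (j - i : ℕ) * k i j)
      rw [mul_comm, hk, hrev, pow_add, mul_assoc]
    · simp only [Nat.sub_eq_zero_of_le hij, pow_zero, one_dvd]
  · intro hdvd
    choose c hc using hdvd
    refine ⟨fun i j => π ^ (i - j : ℕ) * c i j, fun i j => ?_⟩
    have hrev : (j - i : ℕ) + j.rev = i.rev + (i - j) := by
      simp only [Fin.val_rev]; omega
    rw [hc, mul_right_comm, ← pow_add, hrev, pow_add, mul_assoc]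

theorem apply_of_mul_powDiag_eq (hπ : IsLeftRegular π) {h k : Matrix (Fin n) (Fin n) R}
    (hk : h * powDiag n π = powDiag n π * k) {i j : Fin n} (hij : j ≤ i) :
    k i j = π ^ (i - j : ℕ) * h i j := by
  have hrev : (j.rev : ℕ) = i.rev + (i - j) := by
    simp only [Fin.val_rev]; omega
  have hentry := mul_powDiag_eq_powDiag_mul_iff.1 hk i j
  rw [hrev, pow_add] at hentry
  exact hπ.pow (i.rev : ℕ) (by linear_combination -hentry)

end PowDiag

section Similitude

variable {R n : Type*} [CommRing R] [Fintype n] {J d g h k : Matrix n n R} {μ ν : R}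

/-- `g` is a similitude with multiplier `μ` of the bilinear form with Gram matrix `J`. -/
def IsSimilitude (J g : Matrix n n R) (μ : R) : Prop :=
  gᵀ * J * g = μ • J

theorem IsSimilitude.mul (hg : IsSimilitude J g μ) (hh : IsSimilitude J h ν) :
    IsSimilitude J (g * h) (μ * ν) :=
  calc (g * h)ᵀ * J * (g * h)
      = hᵀ * (gᵀ * J * g) * h := by simp only [transpose_mul, Matrix.mul_assoc]
    _ = (μ * ν) • J := by rw [hg, Matrix.mul_smul, Matrix.smul_mul, hh, smul_smul]

theorem IsSimilitude.of_mul (hν : IsLeftRegular ν) (hd : IsSimilitude J d ν)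
    (hdk : IsSimilitude J (d * k) (ν * μ)) : IsSimilitude J k μ := by
  have hsmul : ν • (kᵀ * J * k) = ν • μ • J :=
    calc ν • (kᵀ * J * k)
        = kᵀ * (dᵀ * J * d) * k := by rw [hd, Matrix.mul_smul, Matrix.smul_mul]
      _ = (d * k)ᵀ * J * (d * k) := by simp only [transpose_mul, Matrix.mul_assoc]
      _ = ν • μ • J := by rw [hdk, smul_smul]
  ext i j
  exact hν (congrFun₂ hsmul i j)

theorem IsSimilitude.isUnit_det [DecidableEq n] (hJ : IsUnit J.det) (hμ : IsUnit μ)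
    (hg : IsSimilitude J g μ) : IsUnit g.det := by
  have hdet : g.det * J.det * g.det = μ ^ Fintype.card n * J.det := by
    simpa only [det_mul, det_transpose, det_smul] using congrArg det hg
  exact isUnit_of_mul_isUnit_right (hdet ▸ (hμ.pow _).mul hJ)

theorem isSimilitude_map_iff {S : Type*} [CommRing S] {f : R →+* S}
    (hf : Function.Injective f) :
    IsSimilitude (J.map f) (g.map f) (f μ) ↔ IsSimilitude J g μ := by
  have hsmul : f μ • J.map f = (μ • J).map f := by
    ext i j; simp only [Matrix.smul_apply, map_apply, smul_eq_mul, map_mul]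
  rw [IsSimilitude, ← transpose_map, ← Matrix.map_mul, ← Matrix.map_mul, hsmul]
  exact (Matrix.map_injective hf).eq_iff

end Similitude

section SymplecticForm

variable {R : Type*} [CommRing R] {g h : Matrix (Fin 4) (Fin 4) R} {μ π : R}

/-- The Gram matrix `J` of the symplectic form over an arbitrary ring `R`. -/
def symplecticGram (R : Type*) [CommRing R] : Matrix (Fin 4) (Fin 4) R :=
  !![0, 0, 0, 1; 0, 0, 1, 0; 0, -1, 0, 0; -1, 0, 0, 0]

theorem det_symplecticGram : (symplecticGram R).det = 1 := by
  simp [symplecticGram, det_succ_row_zero, Fin.sum_univ_succ, Fin.succAbove, pow_succ]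

theorem IsSimilitude.symplecticGram_apply (hg : IsSimilitude (symplecticGram R) g μ)
    (i j : Fin 4) :
    g 0 i * g 3 j + g 1 i * g 2 j - g 2 i * g 1 j - g 3 i * g 0 j =
      μ * symplecticGram R i j := by
  have hentry : (gᵀ * symplecticGram R * g) i j = μ * symplecticGram R i j :=
    congrFun₂ hg i j
  rw [← hentry]
  simp only [mul_apply, transpose_apply, Fin.sum_univ_four, symplecticGram, of_apply, cons_val]
  ring

theorem isSimilitude_powDiag (π : R) : IsSimilitude (symplecticGram R) (powDiag 4 π) (π ^ 3) := by
  ext i j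
  rw [powDiag, diagonal_transpose, mul_diagonal, diagonal_mul]
  fin_cases i <;> fin_cases j <;> simp [symplecticGram, Fin.rev] <;> ring

theorem IsSimilitude.pow_dvd_apply (hh : IsSimilitude (symplecticGram R) h μ)
    (h33 : IsCoprime (h 3 3) π) (h12 : π ∣ h 1 2) (h23 : π ∣ h 2 3) (h13 : π ^ 2 ∣ h 1 3)
    (h03 : π ^ 3 ∣ h 0 3) (i j : Fin 4) : π ^ (j - i : ℕ) ∣ h i j := by
  have h13' : π ∣ h 1 3 := (dvd_pow_self π two_ne_zero).trans h13
  have h03' : π ^ 2 ∣ h 0 3 := (pow_dvd_pow π (by norm_num)).trans h03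
  have h03'' : π ∣ h 0 3 := (dvd_pow_self π three_ne_zero).trans h03
  have h01 : π ∣ h 0 1 := by
    refine h33.symm.dvd_of_dvd_mul_right ?_
    have hcol : h 0 1 * h 3 3 = h 2 1 * h 1 3 + h 3 1 * h 0 3 - h 1 1 * h 2 3 := by
      have := hh.symplecticGram_apply 1 3
      simp only [symplecticGram, of_apply, cons_val] at this
      linear_combination this
    rw [hcol]
    exact ((h13'.mul_left _).add (h03''.mul_left _)).sub (h23.mul_left _)
  have h02 : π ^ 2 ∣ h 0 2 := by
    refine h33.symm.pow_left.dvd_of_dvd_mul_right ?_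
    have hcol : h 0 2 * h 3 3 = h 2 2 * h 1 3 + h 3 2 * h 0 3 - h 1 2 * h 2 3 := by
      have := hh.symplecticGram_apply 2 3
      simp only [symplecticGram, of_apply, cons_val] at this
      linear_combination this
    rw [hcol, sq]
    rw [sq] at h13 h03'
    exact ((h13.mul_left _).add (h03'.mul_left _)).sub (mul_dvd_mul h12 h23)
  fin_cases i <;> fin_cases j <;> simp [*]

end SymplecticForm

section CongruenceBorel

variable {R : Type*} [CommRing R] {a b : Ideal R} {g h k : Matrix (Fin 4) (Fin 4) R} {π : R}

/-- The similitudes of the symplectic form over `R` with unit multiplier `≡ 1` modulo `a`, which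
are upper triangular modulo `b` with `(4,4)`-entry `≡ 1` modulo `b`. For `R = ℤ_ℓ`, `a = (ℓ ^ m)`
and `b = (ℓ ^ n)` this is `B^{(1)}_{m,n}`. -/
def congruenceBorel (a b : Ideal R) : Submonoid (Matrix (Fin 4) (Fin 4) R) where
  carrier := {g | (∃ μ : Rˣ, (μ : R) - 1 ∈ a ∧ IsSimilitude (symplecticGram R) g μ) ∧
    (∀ i j, j < i → g i j ∈ b) ∧ g 3 3 - 1 ∈ b}
  one_mem' := by
    refine ⟨⟨1, by simp, by simp [IsSimilitude]⟩, fun i j hij => ?_, by simp⟩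
    rw [one_apply_ne hij.ne']
    exact b.zero_mem
  mul_mem' := by
    rintro g h ⟨⟨μ, hμ, hgμ⟩, hg, hg33⟩ ⟨⟨ν, hν, hhν⟩, hh, hh33⟩
    refine ⟨⟨μ * ν, ?_, by simpa only [Units.val_mul] using hgμ.mul hhν⟩, fun i j hij => ?_, ?_⟩
    · have hsplit : ((μ * ν : Rˣ) : R) - 1 = μ * (ν - 1) + (μ - 1) := by push_cast; ring
      exact hsplit ▸ a.add_mem (a.mul_mem_left _ hν) hμ
    · rw [mul_apply]
      refine b.sum_mem fun l _ => ?_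
      rcases lt_or_ge l i with hl | hl
      · exact b.mul_mem_right _ (hg i l hl)
      · exact b.mul_mem_left _ (hh l j (hij.trans_le hl))
    · have hsplit : (g * h) 3 3 - 1 = g 3 0 * h 0 3 + g 3 1 * h 1 3 + g 3 2 * h 2 3 +
          ((g 3 3 - 1) * h 3 3 + (h 3 3 - 1)) := by
        rw [mul_apply, Fin.sum_univ_four]; ring
      rw [hsplit]
      have hrow (l : Fin 4) (hl : l < 3) : g 3 l * h l 3 ∈ b := b.mul_mem_right _ (hg 3 l hl)
      exact b.add_mem (b.add_mem (b.add_mem (hrow 0 (by decide)) (hrow 1 (by decide)))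
        (hrow 2 (by decide))) (b.add_mem (b.mul_mem_right _ hg33) hh33)

theorem mem_congruenceBorel_of_mul_powDiag_eq (hπ : IsLeftRegular π)
    (hh : h ∈ congruenceBorel a b) (hk : h * powDiag 4 π = powDiag 4 π * k) :
    k ∈ congruenceBorel a b := by
  obtain ⟨⟨μ, hμ, hsim⟩, hlower, hcorner⟩ := hh
  refine ⟨⟨μ, hμ, .of_mul (hπ.pow 3) (isSimilitude_powDiag π) ?_⟩, fun i j hij => ?_, ?_⟩
  · rw [← hk, mul_comm]
    exact hsim.mul (isSimilitude_powDiag π)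
  · rw [apply_of_mul_powDiag_eq hπ hk hij.le]
    exact b.mul_mem_left _ (hlower i j hij)
  · rwa [apply_of_mul_powDiag_eq hπ hk le_rfl, Nat.sub_self, pow_zero, one_mul]

theorem isCoprime_apply_three_three (hb : b ≤ Ideal.span {π}) (hg : g ∈ congruenceBorel a b) :
    IsCoprime (g 3 3) π :=
  isCoprime_of_dvd_sub_unit 1 (Ideal.mem_span_singleton.1 (hb hg.2.2))

theorem isCoprime_apply_two_two (hb : b ≤ Ideal.span {π}) (hg : g ∈ congruenceBorel a b) :
    IsCoprime (g 2 2) π := by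
  obtain ⟨⟨μ, -, hsim⟩, hlower, -⟩ := hg
  have hcols : g 1 1 * g 2 2 - μ = g 1 2 * g 2 1 + g 0 2 * g 3 1 - g 0 1 * g 3 2 := by
    have := hsim.symplecticGram_apply 1 2
    simp only [symplecticGram, of_apply, cons_val] at this
    linear_combination this
  have hmem : g 1 1 * g 2 2 - μ ∈ b := by
    rw [hcols]
    exact b.sub_mem (b.add_mem (b.mul_mem_left _ (hlower 2 1 (by decide)))
      (b.mul_mem_left _ (hlower 3 1 (by decide)))) (b.mul_mem_left _ (hlower 3 2 (by decide)))
  exact (isCoprime_of_dvd_sub_unit μ (Ideal.mem_span_singleton.1 (hb hmem))).of_mul_left_right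

end CongruenceBorel

section Unipotent

variable {R : Type*} [CommRing R] {a b : Ideal R}

/-- The unipotent factor `U(w,x,y,z)` of the representative `M(w,x,y,z) = U(w,x,y,z) D`, as an
invertible matrix. -/
def unipotent (w x y z : R) : GL (Fin 4) R where
  val := !![1, x, w * x + y, z; 0, 1, w, y; 0, 0, 1, -x; 0, 0, 0, 1]
  inv := !![1, -x, -y, -z; 0, 1, -w, -y - w * x; 0, 0, 1, x; 0, 0, 0, 1]
  val_inv := by
    ext i j
    fin_cases i <;> fin_cases j <;> simp [mul_apply, Fin.sum_univ_four] <;> ring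
  inv_val := by
    ext i j
    fin_cases i <;> fin_cases j <;> simp [mul_apply, Fin.sum_univ_four] <;> ring

theorem unipotent_inv (w x y z : R) :
    (unipotent w x y z)⁻¹ = unipotent (-w) (-x) (-y - w * x) (-z) := by
  ext i j
  change (unipotent w x y z).inv i j = (unipotent (-w) (-x) (-y - w * x) (-z)).val i j
  fin_cases i <;> fin_cases j <;> simp [unipotent]

theorem unipotent_mem_congruenceBorel (w x y z : R) :
    (unipotent w x y z).val ∈ congruenceBorel a b := by
  refine ⟨⟨1, by simp, ?_⟩, fun i j hij => ?_, by simp [unipotent]⟩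
  · ext i j
    fin_cases i <;> fin_cases j <;>
      simp [unipotent, symplecticGram, mul_apply, Fin.sum_univ_four] <;> ring
  · have hzero : (unipotent w x y z).val i j = 0 := by
      fin_cases i <;> fin_cases j <;> first | rfl | exact absurd hij (by decide)
    exact hzero ▸ b.zero_mem

theorem unipotent_inv_mul_mem_congruenceBorel (w x y z : R) {g : Matrix (Fin 4) (Fin 4) R}
    (hg : g ∈ congruenceBorel a b) : (unipotent w x y z)⁻¹.val * g ∈ congruenceBorel a b := by
  rw [unipotent_inv]
  exact mul_mem (unipotent_mem_congruenceBorel _ _ _ _) hg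

theorem unipotent_inv_mul_apply_zero_three (w x y z : R) (g : Matrix (Fin 4) (Fin 4) R) :
    ((unipotent w x y z)⁻¹.val * g) 0 3 = g 0 3 - x * g 1 3 - y * g 2 3 - z * g 3 3 := by
  rw [unipotent_inv, mul_apply, Fin.sum_univ_four]
  simp only [unipotent, of_apply, cons_val]
  ring

theorem unipotent_inv_mul_apply_one_two (w x y z : R) (g : Matrix (Fin 4) (Fin 4) R) :
    ((unipotent w x y z)⁻¹.val * g) 1 2 = g 1 2 - w * g 2 2 - (y + w * x) * g 3 2 := by
  rw [unipotent_inv, mul_apply, Fin.sum_univ_four]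
  simp only [unipotent, of_apply, cons_val]
  ring

theorem unipotent_inv_mul_apply_one_three (w x y z : R) (g : Matrix (Fin 4) (Fin 4) R) :
    ((unipotent w x y z)⁻¹.val * g) 1 3 = g 1 3 - w * (g 2 3 + x * g 3 3) - y * g 3 3 := by
  rw [unipotent_inv, mul_apply, Fin.sum_univ_four]
  simp only [unipotent, of_apply, cons_val]
  ring

theorem unipotent_inv_mul_apply_two_three (w x y z : R) (g : Matrix (Fin 4) (Fin 4) R) :
    ((unipotent w x y z)⁻¹.val * g) 2 3 = g 2 3 + x * g 3 3 := by
  rw [unipotent_inv, mul_apply, Fin.sum_univ_four]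
  simp only [unipotent, of_apply, cons_val]
  ring

end Unipotent

section Decomposition

variable {R ιw ιx ιy ιz : Type*} [CommRing R] {a b : Ideal R} {π : R}
  {w : ιw → R} {x : ιx → R} {y : ιy → R} {z : ιz → R}

theorem exists_pow_dvd_unipotent_inv_mul (hb : b ≤ Ideal.span {π}) (hw : IsResidueSystem π w)
    (hx : IsResidueSystem π x) (hy : IsResidueSystem (π ^ 2) y) (hz : IsResidueSystem (π ^ 3) z)
    {g : Matrix (Fin 4) (Fin 4) R} (hg : g ∈ congruenceBorel a b) :
    ∃ i j k l, ∀ s t : Fin 4,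
      π ^ (t - s : ℕ) ∣ ((unipotent (w i) (x j) (y k) (z l))⁻¹.val * g) s t := by
  have h33 : IsCoprime (g 3 3) π := isCoprime_apply_three_three hb hg
  obtain ⟨i, hi⟩ := hw.exists_dvd_sub_mul (isCoprime_apply_two_two hb hg) (g 1 2)
  obtain ⟨j, hj⟩ := hx.exists_dvd_sub_mul h33 (-g 2 3)
  obtain ⟨k, hk⟩ := hy.exists_dvd_sub_mul h33.pow_right (g 1 3 - w i * (g 2 3 + x j * g 3 3))
  obtain ⟨l, hl⟩ := hz.exists_dvd_sub_mul h33.pow_right (g 0 3 - x j * g 1 3 - y k * g 2 3)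
  have hmem := unipotent_inv_mul_mem_congruenceBorel (w i) (x j) (y k) (z l) hg
  have h32 : π ∣ g 3 2 := Ideal.mem_span_singleton.1 (hb (hg.2.1 3 2 (by decide)))
  obtain ⟨μ, -, hsim⟩ := hmem.1
  refine ⟨i, j, k, l, hsim.pow_dvd_apply (isCoprime_apply_three_three hb hmem) ?_ ?_ ?_ ?_⟩
  · rw [unipotent_inv_mul_apply_one_two]
    exact hi.sub (h32.mul_left _)
  · rw [unipotent_inv_mul_apply_two_three]
    exact (dvd_neg.2 hj).trans (dvd_of_eq (by ring))
  · rwa [unipotent_inv_mul_apply_one_three]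
  · rwa [unipotent_inv_mul_apply_zero_three]

theorem eq_of_pow_dvd_unipotent_inv_mul (hw : IsResidueSystem π w) (hx : IsResidueSystem π x)
    (hy : IsResidueSystem (π ^ 2) y) (hz : IsResidueSystem (π ^ 3) z) {i i' j j' k k' l l'}
    (h : ∀ s t : Fin 4, π ^ (t - s : ℕ) ∣ ((unipotent (w i) (x j) (y k) (z l))⁻¹.val *
      (unipotent (w i') (x j') (y k') (z l')).val) s t) :
    i = i' ∧ j = j' ∧ k = k' ∧ l = l' := by
  have h12 : π ∣ w i' - w i := by
    have hentry := h 1 2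
    rw [unipotent_inv_mul_apply_one_two] at hentry
    simpa [unipotent] using hentry
  obtain rfl : i' = i := hw.eq_of_dvd_sub h12
  have h23 : π ∣ x j - x j' := by
    have hentry := h 2 3
    rw [unipotent_inv_mul_apply_two_three] at hentry
    simpa [unipotent, neg_add_eq_sub] using hentry
  obtain rfl : j = j' := hx.eq_of_dvd_sub h23
  have h13 : π ^ 2 ∣ y k' - y k := by
    have hentry := h 1 3
    rw [unipotent_inv_mul_apply_one_three] at hentry
    simpa [unipotent] using hentry
  obtain rfl : k' = k := hy.eq_of_dvd_sub h13
  have h03 : π ^ 3 ∣ z l' - z l := by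
    have hentry := h 0 3
    rw [unipotent_inv_mul_apply_zero_three] at hentry
    simpa [unipotent, mul_comm] using hentry
  obtain rfl : l' = l := hz.eq_of_dvd_sub h03
  exact ⟨rfl, rfl, rfl, rfl⟩

theorem stmt10_general (hπ : IsLeftRegular π) (hb : b ≤ Ideal.span {π})
    (hw : IsResidueSystem π w) (hx : IsResidueSystem π x) (hy : IsResidueSystem (π ^ 2) y)
    (hz : IsResidueSystem (π ^ 3) z) :
    IsDoubleCosetDecomposition (congruenceBorel a b : Set (Matrix (Fin 4) (Fin 4) R))
      (powDiag 4 π) fun i : ιw × ιx × ιy × ιz =>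
        (unipotent (w i.1) (x i.2.1) (y i.2.2.1) (z i.2.2.2)).val * powDiag 4 π := by
  refine isDoubleCosetDecomposition_of_submonoid _
    (fun i => unipotent_mem_congruenceBorel _ _ _ _) (fun g hg => ?_) ?_
  · obtain ⟨i, j, k, l, hdvd⟩ := exists_pow_dvd_unipotent_inv_mul hb hw hx hy hz hg
    obtain ⟨c, hc⟩ := (exists_mul_powDiag_eq_iff hπ).2 hdvd
    have hmem := unipotent_inv_mul_mem_congruenceBorel (w i) (x j) (y k) (z l) hg
    refine ⟨(i, j, k, l), c, mem_congruenceBorel_of_mul_powDiag_eq hπ hmem hc, ?_⟩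
    rw [mul_assoc, ← hc, mul_assoc, Units.mul_inv_cancel_left]
  · rintro ⟨i, j, k, l⟩ ⟨i', j', k', l'⟩ c - hc
    have hc' : ((unipotent (w i') (x j') (y k') (z l'))⁻¹.val *
        (unipotent (w i) (x j) (y k) (z l)).val) * powDiag 4 π = powDiag 4 π * c := by
      rw [mul_assoc, hc, mul_assoc, Units.inv_mul_cancel_left]
    obtain ⟨rfl, rfl, rfl, rfl⟩ := eq_of_pow_dvd_unipotent_inv_mul hw hx hy hz
      ((exists_mul_powDiag_eq_iff hπ).1 ⟨c, hc'⟩)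
    rfl

end Decomposition

section Padic

variable {p : ℕ} [Fact p.Prime]

theorem norm_coe_le_pow_iff_mem_span (k : ℕ) (x : ℤ_[p]) :
    ‖(x : ℚ_[p])‖ ≤ (p : ℝ) ^ (-(k : ℤ)) ↔ x ∈ Ideal.span {(p : ℤ_[p]) ^ k} := by
  rw [← PadicInt.norm_def, PadicInt.norm_le_pow_iff_mem_span_pow]

theorem isSimilitude_coe_iff {G : Matrix (Fin 4) (Fin 4) ℤ_[p]} {μ : ℤ_[p]} :
    (G.map PadicInt.Coe.ringHom)ᵀ * Jmat p * G.map PadicInt.Coe.ringHom = (μ : ℚ_[p]) • Jmat p ↔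
      IsSimilitude (symplecticGram ℤ_[p]) G μ := by
  have hJ : Jmat p = (symplecticGram ℤ_[p]).map PadicInt.Coe.ringHom := by
    ext i j
    fin_cases i <;> fin_cases j <;> simp [Jmat, symplecticGram]
  rw [hJ]
  exact isSimilitude_map_iff Subtype.val_injective

theorem map_mem_Bmn1_iff {m n : ℕ} {G : Matrix (Fin 4) (Fin 4) ℤ_[p]} :
    G.map PadicInt.Coe.ringHom ∈ Bmn1 p m n ↔
      G ∈ congruenceBorel (Ideal.span {(p : ℤ_[p]) ^ m}) (Ideal.span {(p : ℤ_[p]) ^ n}) := by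
  constructor
  · rintro ⟨-, -, ⟨μ, hμ, hμm, hsim⟩, h10, h20, h21, h30, h31, h32, h33⟩
    have hcorner : G 3 3 - 1 ∈ Ideal.span {(p : ℤ_[p]) ^ n} :=
      (norm_coe_le_pow_iff_mem_span n _).1 h33
    have hlower {i j : Fin 4} (h : ‖G.map PadicInt.Coe.ringHom i j‖ ≤ (p : ℝ) ^ (-(n : ℤ))) :
        G i j ∈ Ideal.span {(p : ℤ_[p]) ^ n} := (norm_coe_le_pow_iff_mem_span n _).1 h
    refine ⟨⟨PadicInt.mkUnits hμ, (norm_coe_le_pow_iff_mem_span m _).1 hμm,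
      isSimilitude_coe_iff.1 hsim⟩, fun i j hij => hlower ?_, hcorner⟩
    fin_cases i <;> fin_cases j <;> first | assumption | exact absurd hij (by decide)
  · rintro ⟨⟨μ, hμ, hsim⟩, hlower, hcorner⟩
    have hnorm (i j : Fin 4) (hij : j < i) :
        ‖G.map PadicInt.Coe.ringHom i j‖ ≤ (p : ℝ) ^ (-(n : ℤ)) :=
      (norm_coe_le_pow_iff_mem_span n _).2 (hlower i j hij)
    have hdet : IsUnit G.det :=
      hsim.isUnit_det (det_symplecticGram (R := ℤ_[p]) ▸ isUnit_one) μ.isUnit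
    refine ⟨fun i j => (G i j).2, ?_, ⟨μ, PadicInt.norm_units μ,
      (norm_coe_le_pow_iff_mem_span m _).2 hμ, isSimilitude_coe_iff.2 hsim⟩,
      hnorm 1 0 (by decide), hnorm 2 0 (by decide), hnorm 2 1 (by decide), hnorm 3 0 (by decide),
      hnorm 3 1 (by decide), hnorm 3 2 (by decide), (norm_coe_le_pow_iff_mem_span n _).2 hcorner⟩
    rw [← RingHom.mapMatrix_apply, ← RingHom.map_det]
    exact PadicInt.isUnit_iff.1 hdet

theorem Bmn1_eq_image (m n : ℕ) :
    Bmn1 p m n = PadicInt.Coe.ringHom.mapMatrix ''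
      (congruenceBorel (Ideal.span {(p : ℤ_[p]) ^ m}) (Ideal.span {(p : ℤ_[p]) ^ n}) :
        Set (Matrix (Fin 4) (Fin 4) ℤ_[p])) := by
  refine Set.Subset.antisymm (fun g hg => ?_) (Set.image_subset_iff.2 fun G hG => ?_)
  · let G : Matrix (Fin 4) (Fin 4) ℤ_[p] := fun i j => ⟨g i j, hg.1 i j⟩
    exact ⟨G, map_mem_Bmn1_iff.1 hg, rfl⟩
  · exact map_mem_Bmn1_iff.2 hG

theorem mapMatrix_powDiag :
    PadicInt.Coe.ringHom.mapMatrix (powDiag 4 (p : ℤ_[p])) =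
      diagonal ![(p : ℚ_[p]) ^ 3, (p : ℚ_[p]) ^ 2, (p : ℚ_[p]), 1] := by
  ext i j
  fin_cases i <;> fin_cases j <;> simp [powDiag, Fin.rev]

theorem rep10_eq_map (i : Fin p × Fin p × Fin (p ^ 2) × Fin (p ^ 3)) :
    rep10 p i = PadicInt.Coe.ringHom.mapMatrix
      ((unipotent ((i.1 : ℕ) : ℤ_[p]) (i.2.1 : ℕ) (i.2.2.1 : ℕ) (i.2.2.2 : ℕ)).val *
        powDiag 4 (p : ℤ_[p])) := by
  rw [map_mul, mapMatrix_powDiag]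
  ext s t
  rw [mul_diagonal]
  fin_cases s <;> fin_cases t <;> simp [rep10, unipotent] <;> ring

end Padic

/-- Double coset decomposition of `B^{(1)}_{m,n} · diag(ℓ³,ℓ²,ℓ,1) · B^{(1)}_{m,n}` into
`ℓ⁷` pairwise distinct left cosets. -/
theorem stmt10 (p : ℕ) [Fact p.Prime] (m n : ℕ) (hn : 1 ≤ n) :
    (Bmn1 p m n *
        {Matrix.diagonal ![(p : ℚ_[p]) ^ 3, (p : ℚ_[p]) ^ 2, (p : ℚ_[p]), 1]} *
          Bmn1 p m n =
      ⋃ i : Fin p × Fin p × Fin (p ^ 2) × Fin (p ^ 3),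
        ({rep10 p i} : Set (Matrix (Fin 4) (Fin 4) ℚ_[p])) * Bmn1 p m n) ∧
    Function.Injective
      (fun i : Fin p × Fin p × Fin (p ^ 2) × Fin (p ^ 3) =>
        ({rep10 p i} : Set (Matrix (Fin 4) (Fin 4) ℚ_[p])) * Bmn1 p m n) := by
  have hp : IsLeftRegular (p : ℤ_[p]) :=
    (IsRegular.of_ne_zero PadicInt.prime_p.ne_zero).left
  have hspan : Ideal.span {(p : ℤ_[p]) ^ n} ≤ Ideal.span {(p : ℤ_[p])} :=
    Ideal.span_singleton_le_span_singleton.2 (dvd_pow_self _ (Nat.one_le_iff_ne_zero.1 hn))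
  rw [← mapMatrix_powDiag, Bmn1_eq_image, funext rep10_eq_map]
  exact (stmt10_general hp hspan (isResidueSystem_padicInt_natCast_prime p)
    (isResidueSystem_padicInt_natCast_prime p) (isResidueSystem_padicInt_natCast p 2)
    (isResidueSystem_padicInt_natCast p 3)).image (map_injective Subtype.val_injective)
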